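/- Let R be the quotient of ℂ⟨e1,e2,e3⟩ by the two-sided ideal generated by e1e2 + e2e1 − e3, e1e3 + e3e1, and e2e3 + e3e2 (the universal enveloping algebra of the color analogue of the Heisenberg Lie algebra). Then h_0 = 1, h_1 = 2, h_2 = 2, h_3 = 1, and h_n = 0 for all n ≥ 4. -/

import Mathlib

open CategoryTheory FreeAlgebra

/-- `Ext^m_R(ℂ,ℂ)` as a ℂ-module, where `ℂ` is an `R`-module via the augmentation `ε`. -/
noncomputable def extC (R : Type) [Ring R] [Algebra ℂ R] (ε : R →ₐ[ℂ] ℂ) (m : ℕ) :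
    ModuleCat ℂ :=
  letI : Module R ℂ := Module.compHom ℂ ε.toRingHom
  ((Ext ℂ (ModuleCat R) m).obj (Opposite.op (ModuleCat.of R ℂ))).obj (ModuleCat.of R ℂ)

/-- `h_m = dim_ℂ Ext^m_R(ℂ,ℂ)`. -/
noncomputable def extDim (R : Type) [Ring R] [Algebra ℂ R] (ε : R →ₐ[ℂ] ℂ) (m : ℕ) : ℕ :=
  Module.finrank ℂ (extC R ε m)

/-- Relations of the color Heisenberg algebra: `e1e2 + e2e1 = e3`, `e1e3 + e3e1 = 0`, `e2e3 + e3e2 = 0`. -/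
inductive CRel : FreeAlgebra ℂ (Fin 3) → FreeAlgebra ℂ (Fin 3) → Prop
  | r12 : CRel (ι ℂ 0 * ι ℂ 1 + ι ℂ 1 * ι ℂ 0) (ι ℂ 2)
  | r13 : CRel (ι ℂ 0 * ι ℂ 2 + ι ℂ 2 * ι ℂ 0) 0
  | r23 : CRel (ι ℂ 1 * ι ℂ 2 + ι ℂ 2 * ι ℂ 1) 0

namespace CH

variable {R : Type} [Ring R] [Algebra ℂ R]

/-- `R` is presented by generators `x, y, z` and the color Heisenberg relations. -/
structure Pres (x y z : R) : Prop where
  rel12 : x * y + y * x = z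
  rel13 : x * z + z * x = 0
  rel23 : y * z + z * y = 0
  left_induction : ∀ (S : Submodule ℂ R), (1 : R) ∈ S → (∀ r ∈ S, x * r ∈ S) →
    (∀ r ∈ S, y * r ∈ S) → ∀ r, r ∈ S
  exists_lift : ∀ (A : Type) [Ring A] [Algebra ℂ A] (X Y Z : A), X * Y + Y * X = Z →
    X * Z + Z * X = 0 → Y * Z + Z * Y = 0 →
    ∃ f : R →ₐ[ℂ] A, f x = X ∧ f y = Y ∧ f z = Z

/-! ### PBW basis -/
abbrev V := (ℕ × ℕ × ℕ) →₀ ℂ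
noncomputable def e (k j i : ℕ) : V := Finsupp.single (k, j, i) 1

noncomputable def mk (f : ℕ → ℕ → ℕ → V) : V →ₗ[ℂ] V :=
  Finsupp.linearCombination ℂ (fun t : ℕ × ℕ × ℕ => f t.1 t.2.1 t.2.2)

@[simp] lemma mk_e (f : ℕ → ℕ → ℕ → V) (k j i : ℕ) : mk f (e k j i) = f k j i := by
  simp [mk, e]

lemma ext_e {M : Type} [AddCommGroup M] [Module ℂ M] {f g : V →ₗ[ℂ] M}
    (h : ∀ k j i, f (e k j i) = g (e k j i)) : f = g := by
  apply Finsupp.lhom_ext'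
  rintro ⟨k, j, i⟩
  ext
  exact h k j i

/-- Left multiplication by `x, y, z` on the basis `z^k y^j x^i`. -/
noncomputable def LX : V →ₗ[ℂ] V :=
  mk fun k j i => (-1 : ℂ) ^ (k + j) • e k j (i + 1) + ((-1 : ℂ) ^ k * j) • e (k + 1) (j - 1) i
noncomputable def LY : V →ₗ[ℂ] V := mk fun k j i => (-1 : ℂ) ^ k • e k (j + 1) i
noncomputable def LZ : V →ₗ[ℂ] V := mk fun k j i => e (k + 1) j i
/-- Right multiplications by `x` and `z`. -/
noncomputable def SX : V →ₗ[ℂ] V := mk fun k j i => e k j (i + 1)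
noncomputable def SZ : V →ₗ[ℂ] V := mk fun k j i => (-1 : ℂ) ^ (i + j) • e (k + 1) j i
/-- One-sided inverses and the projection. -/
noncomputable def TX : V →ₗ[ℂ] V := mk fun k j i => if i = 0 then 0 else e k j (i - 1)
noncomputable def TZ : V →ₗ[ℂ] V := mk fun k j i => (-1 : ℂ) ^ (i + j) • e (k - 1) j i
noncomputable def P0 : V →ₗ[ℂ] V := mk fun k j i => if i = 0 then e k j i else 0

lemma L12 : LX * LY + LY * LX = LZ := by
  apply ext_e
  intro k j i
  rcases j with _ | j <;> rcases Nat.even_or_odd k with hk | hk <;>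
    simp [LX, LY, LZ, pow_add, hk.neg_one_pow] <;> module
lemma L13 : LX * LZ + LZ * LX = 0 := by
  apply ext_e
  intro k j i
  simp [LX, LZ, pow_add]; module
lemma L23 : LY * LZ + LZ * LY = 0 := by
  apply ext_e
  intro k j i
  simp [LY, LZ, pow_add]

lemma cXX : LX * SX = SX * LX := by
  apply ext_e; intro k j i
  simp [LX, SX]
lemma cYX : LY * SX = SX * LY := by
  apply ext_e; intro k j i
  simp [LY, SX]
lemma cXZ : LX * SZ = SZ * LX := by
  apply ext_e; intro k j i
  rcases j with _ | j <;> 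
  simp [LX, SZ, pow_add, smul_smul] <;> module
lemma cYZ : LY * SZ = SZ * LY := by
  apply ext_e; intro k j i
  simp [LY, SZ, pow_add, smul_smul]; module

lemma invX : TX * SX = 1 := by
  apply ext_e; intro k j i
  simp [SX, TX]
lemma invZ : TZ * SZ = 1 := by
  apply ext_e; intro k j i
  simp [SZ, TZ, smul_smul, ← mul_pow]
lemma P0X : P0 * SX = 0 := by
  apply ext_e; intro k j i
  simp [SX, P0]
lemma P0Z : P0 * SZ = SZ * P0 := by
  apply ext_e; intro k j i
  by_cases h : i = 0 <;>
  simp [SZ, P0, h]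
lemma decomp : P0 + SX * TX = 1 := by
  apply ext_e; intro k j i
  rcases i with _ | i <;> simp [P0, SX, TX]
lemma P0P0 : P0 * P0 = P0 := by
  apply ext_e; intro k j i
  by_cases h : i = 0 <;>
  simp [P0, h]


namespace Pres

lemma gyz {x y z : R} (H : Pres x y z) (k : ℕ) : y * z ^ k = (-1 : ℂ) ^ k • (z ^ k * y) := by
  have h : y * z = - (z * y) := eq_neg_of_add_eq_zero_left H.rel23
  induction k with
  | zero => simp
  | succ k ih =>
    rw [pow_succ, ← mul_assoc, ih, smul_mul_assoc, mul_assoc, h, pow_succ]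
    simp [mul_assoc]
lemma gxz {x y z : R} (H : Pres x y z) (k : ℕ) : x * z ^ k = (-1 : ℂ) ^ k • (z ^ k * x) := by
  have h : x * z = - (z * x) := eq_neg_of_add_eq_zero_left H.rel13
  induction k with
  | zero => simp
  | succ k ih =>
    rw [pow_succ, ← mul_assoc, ih, smul_mul_assoc, mul_assoc, h, pow_succ]
    simp [mul_assoc]
lemma gxy {x y z : R} (H : Pres x y z) (j : ℕ) :
    x * y ^ j = (-1 : ℂ) ^ j • (y ^ j * x) + (j : ℂ) • (z * y ^ (j - 1)) := by
  have h : x * y = z - y * x := eq_sub_of_add_eq H.rel12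
  have hyz : y * z = - (z * y) := eq_neg_of_add_eq_zero_left H.rel23
  induction j with
  | zero => simp
  | succ j ih =>
    rw [pow_succ' y j, ← mul_assoc, h, sub_mul, mul_assoc y x, ih]
    rcases j with _ | j
    · simp; abel
    · simp only [mul_add, mul_smul_comm, ← mul_assoc, hyz, Nat.add_sub_cancel, ← pow_succ' y]
      rw [neg_mul, mul_assoc z y, ← pow_succ' y]
      push_cast
      simp only [pow_succ (-1 : ℂ)]
      module

lemma pbw {x y z : R} (H : Pres x y z) : ∃ (φ : R →ₗ[ℂ] V) (ψ : V →ₗ[ℂ] R), (∀ r, ψ (φ r) = r) ∧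
    (∀ v, ψ (SX v) = ψ v * x) ∧ (∀ r, φ (r * x) = SX (φ r)) ∧ (∀ r, φ (r * z) = SZ (φ r)) := by
  obtain ⟨ρ, ρx, ρy, ρz⟩ := H.exists_lift (Module.End ℂ V) LX LY LZ L12 L13 L23
  let φ : R →ₗ[ℂ] V := (LinearMap.applyₗ (e 0 0 0)) ∘ₗ ρ.toLinearMap
  have φ_apply (r : R) : φ r = ρ r (e 0 0 0) := rfl
  let ψ : V →ₗ[ℂ] R :=
    Finsupp.linearCombination ℂ (fun t : ℕ × ℕ × ℕ => z ^ t.1 * y ^ t.2.1 * x ^ t.2.2)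
  have ψ_e (k j i : ℕ) : ψ (e k j i) = z ^ k * y ^ j * x ^ i := by simp [ψ, e]
  have comm_of (S : Module.End ℂ V) (hX : LX * S = S * LX) (hY : LY * S = S * LY) (r : R) :
      ρ r * S = S * ρ r := by
    let T : Submodule ℂ R := LinearMap.eqLocus
      (LinearMap.mulRight ℂ S ∘ₗ ρ.toLinearMap) (LinearMap.mulLeft ℂ S ∘ₗ ρ.toLinearMap)
    have hT : ∀ r, r ∈ T ↔ ρ r * S = S * ρ r := by
      intro r; rfl
    rw [← hT]
    apply H.left_induction
    · rw [hT]; simp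
    · intro r hr
      rw [hT] at *
      rw [map_mul, mul_assoc, hr, ρx, ← mul_assoc, hX, mul_assoc]
    · intro r hr
      rw [hT] at *
      rw [map_mul, mul_assoc, hr, ρy, ← mul_assoc, hY, mul_assoc]
  have ψx (v : V) : ψ (LX v) = x * ψ v := by
    have : ψ ∘ₗ LX = LinearMap.mulLeft ℂ x ∘ₗ ψ := by
      apply ext_e; intro k j i
      simp only [LinearMap.comp_apply, LX, mk_e, map_add, map_smul, ψ_e, LinearMap.mulLeft_apply]
      rw [← mul_assoc, ← mul_assoc, H.gxz, smul_mul_assoc, mul_assoc _ x, H.gxy]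
      simp only [smul_mul_assoc, mul_add, add_mul, mul_smul_comm, smul_add, smul_smul, pow_add,
        pow_succ, mul_assoc, ← pow_succ']
    exact LinearMap.congr_fun this v
  have ψy (v : V) : ψ (LY v) = y * ψ v := by
    have : ψ ∘ₗ LY = LinearMap.mulLeft ℂ y ∘ₗ ψ := by
      apply ext_e; intro k j i
      simp only [LinearMap.comp_apply, LY, mk_e, map_smul, ψ_e, LinearMap.mulLeft_apply]
      rw [← mul_assoc, ← mul_assoc, H.gyz]
      simp only [smul_mul_assoc, mul_assoc, pow_succ' y]
    exact LinearMap.congr_fun this v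
  have ψX (v : V) : ψ (SX v) = ψ v * x := by
    have : ψ ∘ₗ SX = LinearMap.mulRight ℂ x ∘ₗ ψ := by
      apply ext_e; intro k j i
      simp [SX, ψ_e, pow_succ, mul_assoc]
    exact LinearMap.congr_fun this v
  refine ⟨φ, ψ, ?_, ψX, ?_, ?_⟩
  · intro r
    let T : Submodule ℂ R := LinearMap.eqLocus (ψ ∘ₗ φ) LinearMap.id
    have hT : ∀ r, r ∈ T ↔ ψ (φ r) = r := by intro r; rfl
    rw [← hT]
    apply H.left_induction
    · rw [hT, φ_apply]; simp [ψ_e]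
    · intro r hr
      rw [hT] at *
      rw [φ_apply, map_mul, ρx, Module.End.mul_apply, ψx, ← φ_apply, hr]
    · intro r hr
      rw [hT] at *
      rw [φ_apply, map_mul, ρy, Module.End.mul_apply, ψy, ← φ_apply, hr]
  · intro r
    have h := congrArg (fun f : Module.End ℂ V => f (e 0 0 0)) (comm_of SX cXX cYX r)
    have h2 : LX (e 0 0 0) = SX (e 0 0 0) := by simp [LX, SX]
    simp only [φ_apply, map_mul, ρx, Module.End.mul_apply, h2] at h ⊢
    exact h
  · intro r
    have h := congrArg (fun f : Module.End ℂ V => f (e 0 0 0)) (comm_of SZ cXZ cYZ r)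
    have h2 : LZ (e 0 0 0) = SZ (e 0 0 0) := by simp [LZ, SZ]
    simp only [φ_apply, map_mul, ρz, Module.End.mul_apply, h2] at h ⊢
    exact h

/-- `x` is right regular. -/
lemma x_regular {x y z : R} (H : Pres x y z) {r : R} (h : r * x = 0) : r = 0 := by
  obtain ⟨φ, ψ, ψφ, -, hx, hz⟩ := H.pbw
  have h2 := hx r
  rw [h, map_zero] at h2
  have h3 := LinearMap.congr_fun invX (φ r)
  rw [Module.End.mul_apply, ← h2, map_zero] at h3
  rw [← ψφ r]
  change 0 = φ r at h3
  rw [← h3, map_zero]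

lemma x_dvd_of_z {x y z : R} (H : Pres x y z) {b u : R} (h : b * z = u * x) : ∃ c, b = c * x := by
  obtain ⟨φ, ψ, ψφ, ψX, hx, hz⟩ := H.pbw
  have h2 : SZ (φ b) = SX (φ u) := by rw [← hz, h, hx]
  have h3 : P0 (SX (φ u)) = 0 := LinearMap.congr_fun P0X (φ u)
  have h4 : P0 (SZ (φ b)) = SZ (P0 (φ b)) := LinearMap.congr_fun P0Z (φ b)
  have h5 : TZ (SZ (P0 (φ b))) = P0 (φ b) := LinearMap.congr_fun invZ (P0 (φ b))
  have h6 : P0 (φ b) + SX (TX (φ b)) = φ b := LinearMap.congr_fun decomp (φ b)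
  have h7 : P0 (φ b) = 0 := by rw [← h5, ← h4, h2, h3, map_zero]
  rw [h7, zero_add] at h6
  exact ⟨ψ (TX (φ b)), by rw [← ψX, h6, ψφ]⟩

lemma exact2 {x y z : R} (H : Pres x y z) (a b : R) (h1 : a * (x * x) + b * (y * x + z) = 0) :
    ∃ c, a = c * y ∧ b = c * x := by
  have hzx : x * z = - (z * x) := eq_neg_of_add_eq_zero_left H.rel13
  have hz : x * (y * x + z) = - (y * x * x) := by
    have : x * y = z - y * x := eq_sub_of_add_eq H.rel12
    rw [mul_add, ← mul_assoc, this, hzx]; noncomm_ring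
  have h2 : b * z = (- (a * x) - b * y) * x := by
    rw [mul_add] at h1
    rw [← sub_eq_zero, ← h1]; noncomm_ring
  obtain ⟨c, hb⟩ := H.x_dvd_of_z h2
  refine ⟨c, ?_, hb⟩
  have h4 : (a - c * y) * x * x = 0 := by
    rw [hb, mul_assoc c, hz] at h1
    rw [← h1]; noncomm_ring
  exact sub_eq_zero.1 (H.x_regular (H.x_regular h4))

/-- Fox calculus. -/
lemma fox {x y z : R} (H : Pres x y z) {M : Type} [AddCommGroup M] [Module R M] [Module ℂ M] [IsScalarTower ℂ R M]
    (m n : M) (h1 : (2 * (x * y) + y * x) • m + (x * x) • n = 0)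
    (h2 : (y * y) • m + (2 * (y * x) + x * y) • n = 0) (a b : R) (hab : a * x + b * y = 0) :
    a • m + b • n = 0 := by
  let op (r : R) (k : M) : Module.End ℂ (M × ℂ) :=
    LinearMap.inl ℂ M ℂ ∘ₗ
      LinearMap.coprod (Algebra.lsmul ℂ ℂ M r) (LinearMap.toSpanSingleton ℂ M k)
  have op_apply (r k p) : op r k p = (r • p.1 + p.2 • k, 0) := by
    simp [op]
  have h12 : op x m * op y n + op y n * op x m = op z (x • n + y • m) := by
    ext p
    · simp [op_apply, ← H.rel12, add_smul, mul_smul]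
    · simp [op_apply]
    · simp [op_apply]
    · simp [op_apply]
  have h13 : op x m * op z (x • n + y • m) + op z (x • n + y • m) * op x m = 0 := by
    ext p
    · simp [op_apply, ← mul_smul, ← add_smul, H.rel13]
    · simp [op_apply]
    · simp only [op_apply, ← H.rel12, LinearMap.comp_apply, LinearMap.inr_apply,
        LinearMap.add_apply, Module.End.mul_apply, Prod.fst_add, LinearMap.zero_apply, Prod.fst_zero]
      simp only [smul_zero, one_smul, zero_add, zero_smul, add_zero, smul_add, ← mul_smul, add_smul,
        two_mul]
      rw [← h1]
      simp only [add_smul, two_mul]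
      abel
    · simp [op_apply]
  have h23 : op y n * op z (x • n + y • m) + op z (x • n + y • m) * op y n = 0 := by
    ext p
    · simp [op_apply, ← mul_smul, ← add_smul, H.rel23]
    · simp [op_apply]
    · simp only [op_apply, ← H.rel12, LinearMap.comp_apply, LinearMap.inr_apply,
        LinearMap.add_apply, Module.End.mul_apply, Prod.fst_add, LinearMap.zero_apply, Prod.fst_zero]
      simp only [smul_zero, one_smul, zero_add, zero_smul, add_zero, smul_add, ← mul_smul, add_smul,
        two_mul]
      rw [← h2]
      simp only [add_smul, two_mul]
      abel
    · simp [op_apply]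
  obtain ⟨f, fx, fy, -⟩ := H.exists_lift _ _ _ _ h12 h13 h23
  have key (k : M) (r : R) : f r (k, 0) = (r • k, 0) := by
    let T : Submodule ℂ R := LinearMap.eqLocus
      (LinearMap.applyₗ ((k, 0) : M × ℂ) ∘ₗ f.toLinearMap)
      (LinearMap.inl ℂ M ℂ ∘ₗ LinearMap.applyₗ k ∘ₗ (Algebra.lsmul ℂ ℂ M).toLinearMap)
    have hT : ∀ r, r ∈ T ↔ f r (k, 0) = (r • k, 0) := by intro r; rfl
    rw [← hT]
    apply H.left_induction
    · rw [hT]; simp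
    · intro r hr
      rw [hT] at *
      rw [map_mul, Module.End.mul_apply, hr, fx, op_apply, mul_smul]; simp
    · intro r hr
      rw [hT] at *
      rw [map_mul, Module.End.mul_apply, hr, fy, op_apply, mul_smul]; simp
  have h := congrArg (fun r => (f r ((0 : M), (1 : ℂ))).1) hab
  simpa [fx, fy, op_apply, key] using h

lemma aug {x y z : R} (H : Pres x y z) (r : R) : ∃ (c : ℂ) (a b : R), r = algebraMap ℂ R c + a * x + b * y := by
  let T : Submodule ℂ R :=
    { carrier := {r | ∃ (c : ℂ) (a b : R), r = algebraMap ℂ R c + a * x + b * y}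
      zero_mem' := ⟨0, 0, 0, by simp⟩
      add_mem' := by
        rintro _ _ ⟨c, a, b, rfl⟩ ⟨c2, a2, b2, rfl⟩
        exact ⟨c + c2, a + a2, b + b2, by rw [map_add]; noncomm_ring⟩
      smul_mem' := by
        rintro t _ ⟨c, a, b, rfl⟩
        exact ⟨t * c, t • a, t • b, by simp [mul_add, Algebra.smul_def, mul_assoc]⟩ }
  change r ∈ T
  apply H.left_induction
  · exact ⟨1, 0, 0, by simp⟩
  · rintro _ ⟨c, a, b, rfl⟩
    refine ⟨0, algebraMap ℂ R c + x * a, x * b, ?_⟩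
    rw [map_zero]
    simp only [mul_add, add_mul, Algebra.commutes c x, mul_assoc, zero_add]
  · rintro _ ⟨c, a, b, rfl⟩
    refine ⟨0, y * a, algebraMap ℂ R c + y * b, ?_⟩
    rw [map_zero]
    simp only [mul_add, add_mul, Algebra.commutes c y, mul_assoc, zero_add]
    abel

end Pres

def bt : ℕ → ℕ
  | 0 => 1
  | 1 => 2
  | 2 => 2
  | 3 => 1
  | _ + 4 => 0

/-- The differentials. -/
def D (x y : R) : (n : ℕ) → Matrix (Fin (bt (n + 1))) (Fin (bt n)) R
  | 0 => (!![x; y] : Matrix (Fin 2) (Fin 1) R)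
  | 1 => (!![2 * (x * y) + y * x, x * x; y * y, 2 * (y * x) + x * y] : Matrix (Fin 2) (Fin 2) R)
  | 2 => (!![y, x] : Matrix (Fin 1) (Fin 2) R)
  | _ + 3 => 0

namespace Pres

lemma D_sq {x y z : R} (H : Pres x y z) (n : ℕ) : D x y (n + 1) * D x y n = 0 := by
  have hx : x * (x * y + y * x) + (x * y + y * x) * x = 0 := by rw [H.rel12, H.rel13]
  have hy : y * (x * y + y * x) + (x * y + y * x) * y = 0 := by rw [H.rel12, H.rel23]
  match n with
  | 0 =>
    change (!![2 * (x * y) + y * x, x * x; y * y, 2 * (y * x) + x * y] : Matrix (Fin 2) (Fin 2) R) *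
      (!![x; y] : Matrix (Fin 2) (Fin 1) R) = 0
    ext i j
    fin_cases i <;> fin_cases j
    · simp [Matrix.mul_apply, Fin.sum_univ_two]
      rw [← hx]; noncomm_ring
    · simp [Matrix.mul_apply, Fin.sum_univ_two]
      rw [← hy]; noncomm_ring
  | 1 =>
    change (!![y, x] : Matrix (Fin 1) (Fin 2) R) *
      (!![2 * (x * y) + y * x, x * x; y * y, 2 * (y * x) + x * y] : Matrix (Fin 2) (Fin 2) R) = 0
    ext i j
    fin_cases i <;> fin_cases j
    · simp [Matrix.mul_apply, Fin.sum_univ_two]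
      rw [← hy]; noncomm_ring
    · simp [Matrix.mul_apply, Fin.sum_univ_two]
      rw [← hx]; noncomm_ring
  | n + 2 => exact Matrix.zero_mul _

open Matrix in
lemma D_exact {x y z : R} (H : Pres x y z) (n : ℕ) (v : Fin (bt (n + 1)) → R) (hv : v ᵥ* D x y n = 0) :
    ∃ w, w ᵥ* D x y (n + 1) = v := by
  match n with
  | 0 =>
    change Fin 2 → R at v
    change v ᵥ* (!![x; y] : Matrix (Fin 2) (Fin 1) R) = 0 at hv
    let N := LinearMap.range (Matrix.vecMulLinear
      (!![2 * (x * y) + y * x, x * x; y * y, 2 * (y * x) + x * y] : Matrix (Fin 2) (Fin 2) R))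
    have h0 := congrFun hv 0
    simp [Matrix.vecMul, dotProduct, Fin.sum_univ_two] at h0
    have := H.fox (M := (Fin 2 → R) ⧸ N) (N.mkQ ![1, 0]) (N.mkQ ![0, 1]) ?_ ?_ (v 0) (v 1) h0
    · rw [← map_smul, ← map_smul, ← map_add, Submodule.mkQ_apply,
        Submodule.Quotient.mk_eq_zero] at this
      obtain ⟨w, hw⟩ := this
      refine ⟨w, Eq.trans hw ?_⟩
      ext i; fin_cases i <;> simp
    · rw [← map_smul, ← map_smul, ← map_add, Submodule.mkQ_apply,
        Submodule.Quotient.mk_eq_zero]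
      refine ⟨![1, 0], ?_⟩
      ext i; fin_cases i <;> simp [Matrix.vecMul, dotProduct, Fin.sum_univ_two]
    · rw [← map_smul, ← map_smul, ← map_add, Submodule.mkQ_apply,
        Submodule.Quotient.mk_eq_zero]
      refine ⟨![0, 1], ?_⟩
      ext i; fin_cases i <;> simp [Matrix.vecMul, dotProduct, Fin.sum_univ_two]
  | 1 =>
    change Fin 2 → R at v
    change v ᵥ* (!![2 * (x * y) + y * x, x * x; y * y, 2 * (y * x) + x * y] :
      Matrix (Fin 2) (Fin 2) R) = 0 at hv
    have h1 := congrFun hv 1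
    simp [Matrix.vecMul, dotProduct, Fin.sum_univ_two] at h1
    obtain ⟨c, h2, h3⟩ := H.exact2 (v 0) (v 1) (by rw [← h1, ← H.rel12]; noncomm_ring)
    refine ⟨(![c] : Fin 1 → R), ?_⟩
    change (![c] : Fin 1 → R) ᵥ* (!![y, x] : Matrix (Fin 1) (Fin 2) R) = v
    ext i; fin_cases i <;> simp [Matrix.vecMul, dotProduct, h2, h3]
  | 2 =>
    change Fin 1 → R at v
    change v ᵥ* (!![y, x] : Matrix (Fin 1) (Fin 2) R) = 0 at hv
    have h1 := congrFun hv 1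
    simp [Matrix.vecMul, dotProduct] at h1
    refine ⟨0, ?_⟩
    rw [Matrix.zero_vecMul]
    ext i
    fin_cases i
    exact (H.x_regular h1).symm
  | n + 3 =>
    change Fin 0 → R at v
    exact ⟨0, Subsingleton.elim (α := Fin 0 → R) _ _⟩

lemma D_min {x y : R} (ε : R →ₐ[ℂ] ℂ) (hx : ε x = 0) (hy : ε y = 0) (n : ℕ) (i j) : ε (D x y n i j) = 0 := by
  match n with
  | 0 =>
    change Fin 2 at i; change Fin 1 at j
    change ε ((!![x; y] : Matrix (Fin 2) (Fin 1) R) i j) = 0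
    fin_cases i <;> fin_cases j <;> simp [hx, hy]
  | 1 =>
    change Fin 2 at i; change Fin 2 at j
    change ε ((!![2 * (x * y) + y * x, x * x; y * y, 2 * (y * x) + x * y] :
      Matrix (Fin 2) (Fin 2) R) i j) = 0
    fin_cases i <;> fin_cases j <;> simp [hx, hy]
  | 2 =>
    change Fin 1 at i; change Fin 2 at j
    change ε ((!![y, x] : Matrix (Fin 1) (Fin 2) R) i j) = 0
    fin_cases i <;> fin_cases j <;> simp [hx, hy]
  | n + 3 => exact map_zero ε

open Matrix in
lemma D_aug {x y z : R} (H : Pres x y z) (ε : R →ₐ[ℂ] ℂ) (hx : ε x = 0) (hy : ε y = 0) (v : Fin (bt 0) → R)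
    (hv : ε (v (0 : Fin 1)) = 0) : ∃ w, w ᵥ* D x y 0 = v := by
  obtain ⟨c, a, b, h⟩ := H.aug (v (0 : Fin 1))
  have hc : c = 0 := by
    rw [h] at hv
    simpa [hx, hy] using hv
  refine ⟨(![a, b] : Fin 2 → R), ?_⟩
  change (![a, b] : Fin 2 → R) ᵥ* (!![x; y] : Matrix (Fin 2) (Fin 1) R) = v
  ext i
  fin_cases i
  refine Eq.trans ?_ h.symm
  simp [Matrix.vecMul, dotProduct, Fin.sum_univ_two, hc]

end Pres

/-! ### Homological algebra -/
section Homological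
open Matrix CategoryTheory.Limits
variable (ε : R →ₐ[ℂ] ℂ) [Module R ℂ]

noncomputable def dif (x y : R) (n : ℕ) :
    ModuleCat.of R (Fin (bt (n + 1)) → R) ⟶ ModuleCat.of R (Fin (bt n) → R) :=
  ModuleCat.ofHom (Matrix.vecMulLinear (D x y n))

lemma dif_apply (x y : R) (n : ℕ) (v : Fin (bt (n + 1)) → R) :
    (dif x y n).hom v = v ᵥ* D x y n := rfl

noncomputable def augMap : ModuleCat.of R (Fin (bt 0) → R) ⟶ ModuleCat.of R ℂ :=
  ModuleCat.ofHom (LinearMap.toSpanSingleton R ℂ (1 : ℂ) ∘ₗ LinearMap.proj (0 : Fin 1))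

lemma augMap_apply (hs : ∀ (r : R) (c : ℂ), r • c = ε r * c) (v : Fin (bt 0) → R) : (augMap (R := R)).hom v = ε (v (0 : Fin 1)) := by
  refine Eq.trans (hs (v (0 : Fin 1)) 1) (mul_one _)

lemma dif_comp {x y z : R} (H : Pres x y z) (n : ℕ) : dif x y (n + 1) ≫ dif x y n = 0 := by
  apply ModuleCat.hom_ext
  apply LinearMap.ext
  intro v
  change ((v : Fin (bt (n + 1 + 1)) → R) ᵥ* D x y (n + 1)) ᵥ* D x y n = 0
  rw [Matrix.vecMul_vecMul, H.D_sq, Matrix.vecMul_zero]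

noncomputable def cplx {x y z : R} (H : Pres x y z) : ChainComplex (ModuleCat.{0} R) ℕ :=
  ChainComplex.of (fun n => ModuleCat.of R (Fin (bt n) → R)) (dif x y) (dif_comp H)

lemma cplx_d {x y z : R} (H : Pres x y z) (n : ℕ) : (cplx H).d (n + 1) n = dif x y n :=
  ChainComplex.of_d (fun n => ModuleCat.of R (Fin (bt n) → R)) (dif x y) n

lemma cplx_exact {x y z : R} (H : Pres x y z) (n : ℕ) : (cplx H).ExactAt (n + 1) := by
  rw [HomologicalComplex.exactAt_iff' _ (n + 1 + 1) (n + 1) n (by simp) (by simp)]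
  rw [ShortComplex.moduleCat_exact_iff]
  intro v hv
  change ((cplx H).d (n + 1) n).hom v = 0 at hv
  change ∃ w, ((cplx H).d (n + 1 + 1) (n + 1)).hom w = v
  rw [cplx_d] at hv ⊢
  exact H.D_exact n v hv

lemma dif_aug (hs : ∀ (r : R) (c : ℂ), r • c = ε r * c) {x y : R} (hx : ε x = 0) (hy : ε y = 0) : dif x y 0 ≫ augMap = 0 := by
  apply ModuleCat.hom_ext
  apply LinearMap.ext
  intro v
  change (augMap (R := R)).hom ((v : Fin (bt 1) → R) ᵥ* D x y 0) = 0
  rw [augMap_apply ε hs]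
  change ε (∑ i, (v : Fin (bt 1) → R) i * D x y 0 i (0 : Fin 1)) = 0
  rw [map_sum]
  refine Finset.sum_eq_zero fun i _ => ?_
  rw [map_mul]
  exact mul_eq_zero_of_right _ (Pres.D_min ε hx hy 0 i (0 : Fin 1))

noncomputable def res (hs : ∀ (r : R) (c : ℂ), r • c = ε r * c) {x y z : R} (H : Pres x y z) (hx : ε x = 0) (hy : ε y = 0) :
    ProjectiveResolution (ModuleCat.of R ℂ) where
  complex := cplx H
  projective n := by
    change Projective (ModuleCat.of R (Fin (bt n) → R))
    infer_instance
  π := (ChainComplex.toSingle₀Equiv _ _).symm ⟨augMap, by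
    rw [cplx_d]; exact dif_aug ε hs hx hy⟩
  quasiIso := ⟨fun n => by
    cases n
    · rw [ChainComplex.quasiIsoAt₀_iff, ShortComplex.quasiIso_iff_of_zeros']
      · refine ⟨?_, ?_⟩
        · rw [ShortComplex.moduleCat_exact_iff]
          intro v hv
          change (augMap (R := R)).hom v = 0 at hv
          change ∃ w, ((cplx H).d 1 0).hom w = v
          rw [cplx_d]
          exact H.D_aug ε hx hy v ((augMap_apply ε hs v).symm.trans hv)
        · change Epi (augMap (R := R))
          rw [ModuleCat.epi_iff_surjective]
          intro c
          refine ⟨fun _ => algebraMap ℂ R c, ?_⟩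
          refine (augMap_apply ε hs _).trans ?_
          simp
      all_goals rfl
    · rw [quasiIsoAt_iff_exactAt']
      · apply cplx_exact
      · apply ChainComplex.exactAt_succ_single_obj⟩

lemma smul_hom_apply (hs : ∀ (r : R) (c : ℂ), r • c = ε r * c) {M : ModuleCat.{0} R} (c : ℂ) (f : M ⟶ ModuleCat.of R ℂ) (v : M) :
    ((c • f).hom v : ℂ) = c * (f.hom v : ℂ) := by
  have : (c • f).hom v = algebraMap ℂ R c • f.hom v := rfl
  rw [this]
  refine (hs _ _).trans ?_
  simp

lemma finrank_hom (hs : ∀ (r : R) (c : ℂ), r • c = ε r * c) (m : ℕ) :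
    Module.finrank ℂ (ModuleCat.of R (Fin m → R) ⟶ ModuleCat.of R ℂ) = m := by
  let F : (ModuleCat.of R (Fin m → R) ⟶ ModuleCat.of R ℂ) →ₗ[ℂ] (Fin m → ℂ) :=
    { toFun := fun f i => f.hom (Pi.single i (1 : R))
      map_add' := fun f g => rfl
      map_smul' := fun c f => by
        funext i
        exact smul_hom_apply ε hs c f _ }
  have hF : Function.Bijective F := by
    constructor
    · intro f g h
      apply ModuleCat.hom_ext
      apply LinearMap.pi_ext'
      intro i
      apply LinearMap.ext_ring
      exact congrFun h i
    · intro c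
      refine ⟨ModuleCat.ofHom (∑ i, (LinearMap.toSpanSingleton R ℂ (c i)) ∘ₗ LinearMap.proj i), ?_⟩
      funext i
      change (∑ j, (LinearMap.toSpanSingleton R ℂ (c j)) ∘ₗ LinearMap.proj j) (Pi.single i (1 : R))
        = c i
      rw [LinearMap.sum_apply, Finset.sum_eq_single i]
      · simp
      · intro j _ hj
        simp [hj]
      · simp
  rw [(LinearEquiv.ofBijective F hF).finrank_eq]
  simp

lemma dif_comp_zero (hs : ∀ (r : R) (c : ℂ), r • c = ε r * c) {x y : R} (hx : ε x = 0) (hy : ε y = 0) (n : ℕ)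
    (f : ModuleCat.of R (Fin (bt n) → R) ⟶ ModuleCat.of R ℂ) : dif x y n ≫ f = 0 := by
  apply ModuleCat.hom_ext
  apply LinearMap.pi_ext'
  intro i
  apply LinearMap.ext_ring
  change f.hom (Pi.single i (1 : R) ᵥ* D x y n) = 0
  rw [Matrix.single_one_vecMul]
  have h : (D x y n).row i = ∑ j, D x y n i j • (Pi.single j (1 : R) : Fin (bt n) → R) := by
    rw [← pi_eq_sum_univ']
    rfl
  rw [h]
  refine (map_sum f.hom _ _).trans (Finset.sum_eq_zero fun j _ => ?_)
  rw [map_smul]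
  refine (hs _ _).trans ?_
  rw [Pres.D_min ε hx hy, zero_mul]

lemma main (hs : ∀ (r : R) (c : ℂ), r • c = ε r * c) {x y z : R} (H : Pres x y z) (hx : ε x = 0) (hy : ε y = 0) (n : ℕ) :
    Module.finrank ℂ (((Ext ℂ (ModuleCat R) n).obj (Opposite.op (ModuleCat.of R ℂ))).obj
      (ModuleCat.of R ℂ)) = bt n := by
  rw [((res ε hs H hx hy).isoExt n (ModuleCat.of R ℂ)).toLinearEquiv.finrank_eq]
  have hd : ∀ i j, ((cplx H).linearYonedaObj ℂ (ModuleCat.of R ℂ)).d i j = 0 := by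
    intro i j
    by_cases hij : i + 1 = j
    · subst hij
      apply ModuleCat.hom_ext
      apply LinearMap.ext
      intro f
      change (cplx H).d (i + 1) i ≫ f = 0
      rw [cplx_d]
      exact dif_comp_zero ε hs hx hy i f
    · exact HomologicalComplex.shape _ _ _ hij
  have iso := (ShortComplex.HomologyData.ofZeros
    (((cplx H).linearYonedaObj ℂ (ModuleCat.of R ℂ)).sc n) (hd _ _) (hd _ _)).left.homologyIso
  refine (iso.toLinearEquiv.finrank_eq).trans ?_
  exact finrank_hom ε hs (bt n)

end Homological
end CH

/-- The presented algebra satisfies `Pres`. -/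
lemma CH.pres : CH.Pres (RingQuot.mkAlgHom ℂ CRel (ι ℂ 0)) (RingQuot.mkAlgHom ℂ CRel (ι ℂ 1))
    (RingQuot.mkAlgHom ℂ CRel (ι ℂ 2)) := by
  have rel12 : RingQuot.mkAlgHom ℂ CRel (ι ℂ 0) * RingQuot.mkAlgHom ℂ CRel (ι ℂ 1) +
      RingQuot.mkAlgHom ℂ CRel (ι ℂ 1) * RingQuot.mkAlgHom ℂ CRel (ι ℂ 0) =
      RingQuot.mkAlgHom ℂ CRel (ι ℂ 2) := by
    simpa using RingQuot.mkAlgHom_rel ℂ CRel.r12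
  refine ⟨rel12, by simpa using RingQuot.mkAlgHom_rel ℂ CRel.r13,
    by simpa using RingQuot.mkAlgHom_rel ℂ CRel.r23, ?_, ?_⟩
  · intro S h1 hx hy r
    have hz : ∀ r ∈ S, RingQuot.mkAlgHom ℂ CRel (ι ℂ 2) * r ∈ S := by
      intro r hr
      rw [← rel12, add_mul, mul_assoc, mul_assoc]
      exact S.add_mem (hx _ (hy _ hr)) (hy _ (hx _ hr))
    have key : ∀ a : FreeAlgebra ℂ (Fin 3), ∀ s ∈ S, RingQuot.mkAlgHom ℂ CRel a * s ∈ S := by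
      intro a
      induction a using FreeAlgebra.induction with
      | grade0 c =>
        intro s hs
        rw [AlgHom.commutes, ← Algebra.smul_def]
        exact S.smul_mem c hs
      | grade1 i =>
        intro s hs
        fin_cases i
        · exact hx s hs
        · exact hy s hs
        · exact hz s hs
      | mul a b ha hb =>
        intro s hs
        rw [map_mul, mul_assoc]
        exact ha _ (hb _ hs)
      | add a b ha hb =>
        intro s hs
        rw [map_add, add_mul]
        exact S.add_mem (ha _ hs) (hb _ hs)
    obtain ⟨a, rfl⟩ := RingQuot.mkAlgHom_surjective ℂ CRel r
    simpa using key a 1 h1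
  · intro A _ _ X Y Z h12 h13 h23
    refine ⟨RingQuot.liftAlgHom ℂ ⟨FreeAlgebra.lift ℂ ![X, Y, Z], ?_⟩, ?_, ?_, ?_⟩
    · intro a b h
      cases h <;> simp [h12, h13, h23]
    · simp
    · simp
    · simp

lemma CH.extDim_eq (ε : RingQuot CRel →ₐ[ℂ] ℂ)
    (hε : ∀ i : Fin 3, ε (RingQuot.mkAlgHom ℂ CRel (ι ℂ i)) = 0) (n : ℕ) :
    extDim (RingQuot CRel) ε n = CH.bt n := by
  let _ : Module (RingQuot CRel) ℂ := Module.compHom ℂ ε.toRingHom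
  exact CH.main ε (fun _ _ => rfl) CH.pres (hε 0) (hε 1) n

theorem betti_numbers (ε : RingQuot CRel →ₐ[ℂ] ℂ)
    (hε : ∀ i : Fin 3, ε (RingQuot.mkAlgHom ℂ CRel (ι ℂ i)) = 0) :
    extDim (RingQuot CRel) ε 0 = 1 ∧ extDim (RingQuot CRel) ε 1 = 2 ∧
    extDim (RingQuot CRel) ε 2 = 2 ∧ extDim (RingQuot CRel) ε 3 = 1 ∧
    ∀ n ≥ 4, extDim (RingQuot CRel) ε n = 0 := by
  simp only [CH.extDim_eq ε hε]
  refine ⟨rfl, rfl, rfl, rfl, ?_⟩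
  intro n hn
  obtain ⟨k, rfl⟩ := Nat.exists_eq_add_of_le' hn
  rfl
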